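/- arXiv:1708.09263 — 2 statements merged into one kernel-verified Lean document; each statement's English description precedes it below -/
import Mathlib

section
/- Let (Ω, 𝓕, μ) be a probability space. Let N be a map from real-valued measurable functions on Ω to [0, ∞], and define the associate functional N'(h) := sup { ∫_Ω |g h| dμ : N(g) ≤ 1 }. Assume: (i) for every measurable u, N(u) = sup { ∫_Ω u h dμ : N'(h) ≤ 1 } (the Lorentz–Luxemburg duality representation); and (ii) for all measurable u, v, ∫_0^∞ u*(t) v*(t) dt ≤ N(u) · N'(v) (Hölder's inequality via decreasing rearrangements). Then for all real-valued bounded measurable f, g on Ω, N(fg − (fg)_Ω) ≤ ‖f‖_∞ · N(g − g_Ω) + ‖g‖_∞ · N(f − f_Ω). -/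
open MeasureTheory ENNReal

/-- The decreasing rearrangement `f*` of a measurable function `f`:
`f*(t) = inf { s ≥ 0 : μ({x : |f(x)| > s}) ≤ t }`, with values in `[0, ∞]`. -/
noncomputable def decRearr {Ω : Type*} [MeasurableSpace Ω] (μ : Measure Ω)
    (f : Ω → ℝ) (t : ℝ) : ℝ≥0∞ :=
  sInf {s : ℝ≥0∞ | μ {x | s < ENNReal.ofReal |f x|} ≤ ENNReal.ofReal t}

/-!
Put `F = f - f_Ω` and `G = g - g_Ω`. The product rule
`f(x)g(x) - f(y)g(y) = ½(f(x) + f(y))(G(x) - G(y)) + ½(g(x) + g(y))(F(x) - F(y))`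
would only bound each term by twice the sup norm. But `G` and `F` have mean zero, so terms
`f(x)G(y)` and `g(x)F(y)` may be added without changing the average over `y`; this turns the first
summand into `½(f(x) + f(y))G(x) + ½(f(x) - f(y))G(y)`, and now
`½|f(x) + f(y)| + ½|f(x) - f(y)| = max |f(x)| |f(y)| ≤ ‖f‖_∞`. Pairing with `h(x)` is therefore
integrating `G ⊗ h` against a signed measure whose total variation has both marginals at most
`‖f‖_∞ μ`, and the layer cake formula bounds such an integral by `‖f‖_∞ ∫ G* h*`. Duality and
Hölder's inequality conclude.
-/

section DecreasingRearrangement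

variable {α β : Type*} [MeasurableSpace α] [MeasurableSpace β] {μ : Measure α} {ν : Measure β}

/-- The distribution function `s ↦ μ {|f| > s}`, of which `decRearr μ f` is the generalized
inverse. Thresholds range over `[0, ∞]`, as in `decRearr`. -/
noncomputable def distribution (μ : Measure α) (f : α → ℝ) (s : ℝ≥0∞) : ℝ≥0∞ :=
  μ {x | s < ‖f x‖ₑ}

lemma antitone_distribution (f : α → ℝ) : Antitone (distribution μ f) :=
  fun _ _ hst => measure_mono fun _ hx => hst.trans_lt hx

lemma le_decRearr_of_lt_distribution {f : α → ℝ} {s : ℝ≥0∞} {t : ℝ}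
    (h : ENNReal.ofReal t < distribution μ f s) : s ≤ decRearr μ f t := by
  refine le_sInf fun r hr => ?_
  simp only [Set.mem_ofPred_eq, ← Real.enorm_eq_ofReal_abs] at hr
  by_contra! hrs
  exact (h.trans_le (antitone_distribution f hrs.le)).not_ge hr

lemma volume_restrict_Ioi_setOf_ofReal_lt (a : ℝ≥0∞) :
    volume.restrict (Set.Ioi 0) {s : ℝ | ENNReal.ofReal s < a} = a := by
  rw [Measure.restrict_apply' measurableSet_Ioi]
  induction a with
  | top => simp only [ofReal_lt_top, Set.ofPred_true, Set.univ_inter, Real.volume_Ioi]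
  | coe a =>
    have hIoo : {s : ℝ | ENNReal.ofReal s < a} ∩ Set.Ioi 0 = Set.Ioo 0 (a : ℝ) := by
      ext s
      rw [Set.mem_inter_iff, and_comm]
      exact and_congr_right fun hs => ENNReal.ofReal_lt_iff_lt_toReal hs.le coe_ne_top
    rw [hIoo, Real.volume_Ioo, sub_zero, ofReal_coe_nnreal]

lemma volume_restrict_Ioi_setOf_ofReal_le (a : ℝ≥0∞) :
    volume.restrict (Set.Ioi 0) {s : ℝ | ENNReal.ofReal s ≤ a} = a := by
  rw [Measure.restrict_apply' measurableSet_Ioi]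
  induction a with
  | top => simp only [le_top, Set.ofPred_true, Set.univ_inter, Real.volume_Ioi]
  | coe a =>
    have hIoc : {s : ℝ | ENNReal.ofReal s ≤ a} ∩ Set.Ioi 0 = Set.Ioc 0 (a : ℝ) := by
      ext s
      rw [Set.mem_inter_iff, and_comm]
      exact and_congr_right fun _ => ENNReal.ofReal_le_iff_le_toReal coe_ne_top
    rw [hIoc, Real.volume_Ioc, sub_zero, ofReal_coe_nnreal]

lemma measurable_distribution_ofReal (f : α → ℝ) :
    Measurable fun s : ℝ => distribution μ f (ENNReal.ofReal s) :=
  (antitone_distribution f).measurable.comp measurable_ofReal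

lemma lintegral_min_distribution_le (f : α → ℝ) (g : β → ℝ) :
    ∫⁻ p, min (distribution μ f (ENNReal.ofReal p.1)) (distribution ν g (ENNReal.ofReal p.2))
        ∂((volume.restrict (Set.Ioi (0 : ℝ))).prod (volume.restrict (Set.Ioi (0 : ℝ)))) ≤
      ∫⁻ t in Set.Ioi (0 : ℝ), decRearr μ f t * decRearr ν g t := by
  set l : Measure ℝ := volume.restrict (Set.Ioi 0) with hl
  let E : Set (ℝ × (ℝ × ℝ)) := {z | ENNReal.ofReal z.1 <
    min (distribution μ f (ENNReal.ofReal z.2.1)) (distribution ν g (ENNReal.ofReal z.2.2))}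
  have hE : MeasurableSet E :=
    measurableSet_lt (measurable_ofReal.comp measurable_fst)
      (((measurable_distribution_ofReal f).comp (measurable_fst.comp measurable_snd)).min
        ((measurable_distribution_ofReal g).comp (measurable_snd.comp measurable_snd)))
  have hslice (t : ℝ) : Prod.mk t ⁻¹' E ⊆ {s : ℝ | ENNReal.ofReal s ≤ decRearr μ f t} ×ˢ
      {s : ℝ | ENNReal.ofReal s ≤ decRearr ν g t} := fun _ hp =>
    ⟨le_decRearr_of_lt_distribution (lt_min_iff.1 hp).1,
      le_decRearr_of_lt_distribution (lt_min_iff.1 hp).2⟩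
  calc ∫⁻ p, min (distribution μ f (ENNReal.ofReal p.1))
          (distribution ν g (ENNReal.ofReal p.2)) ∂(l.prod l)
      = ∫⁻ p, l ((fun t => (t, p)) ⁻¹' E) ∂(l.prod l) :=
        lintegral_congr fun _ => (volume_restrict_Ioi_setOf_ofReal_lt _).symm
    _ = (l.prod (l.prod l)) E := (Measure.prod_apply_symm hE).symm
    _ = ∫⁻ t, (l.prod l) (Prod.mk t ⁻¹' E) ∂l := Measure.prod_apply hE
    _ ≤ ∫⁻ t, decRearr μ f t * decRearr ν g t ∂l := by
        refine lintegral_mono fun t => (measure_mono (hslice t)).trans_eq ?_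
        rw [Measure.prod_prod, hl, volume_restrict_Ioi_setOf_ofReal_le,
          volume_restrict_Ioi_setOf_ofReal_le]

/-- For `C = 1` and the diagonal coupling of `μ` with itself this is the Hardy–Littlewood
inequality. -/
lemma lintegral_enorm_mul_enorm_le_of_fst_le_of_snd_le {π : Measure (α × β)} [SFinite π]
    {C : ℝ≥0∞} (hfst : π.fst ≤ C • μ) (hsnd : π.snd ≤ C • ν)
    {f : α → ℝ} {g : β → ℝ} (hf : Measurable f) (hg : Measurable g) :
    ∫⁻ z, ‖f z.1‖ₑ * ‖g z.2‖ₑ ∂π ≤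
      C * ∫⁻ t in Set.Ioi (0 : ℝ), decRearr μ f t * decRearr ν g t := by
  set l : Measure ℝ := volume.restrict (Set.Ioi 0) with hl
  let E : Set ((α × β) × (ℝ × ℝ)) :=
    {z | ENNReal.ofReal z.2.1 < ‖f z.1.1‖ₑ} ∩ {z | ENNReal.ofReal z.2.2 < ‖g z.1.2‖ₑ}
  have hE : MeasurableSet E :=
    (measurableSet_lt (by fun_prop) (by fun_prop)).inter
      (measurableSet_lt (by fun_prop) (by fun_prop))
  have hslice (z : α × β) : Prod.mk z ⁻¹' E =
      {s : ℝ | ENNReal.ofReal s < ‖f z.1‖ₑ} ×ˢ {s : ℝ | ENNReal.ofReal s < ‖g z.2‖ₑ} := rfl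
  have hmin (p : ℝ × ℝ) : π ((fun z => (z, p)) ⁻¹' E) ≤ C *
      min (distribution μ f (ENNReal.ofReal p.1)) (distribution ν g (ENNReal.ofReal p.2)) := by
    rw [mul_min]
    refine le_min ((measure_mono fun z hz => hz.1).trans ?_)
      ((measure_mono fun z hz => hz.2).trans ?_)
    · exact (Measure.fst_apply (measurableSet_lt measurable_const hf.enorm)).symm.trans_le
        (hfst _)
    · exact (Measure.snd_apply (measurableSet_lt measurable_const hg.enorm)).symm.trans_le
        (hsnd _)
  calc ∫⁻ z, ‖f z.1‖ₑ * ‖g z.2‖ₑ ∂π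
      = ∫⁻ z, (l.prod l) (Prod.mk z ⁻¹' E) ∂π := by
        refine lintegral_congr fun z => ?_
        rw [hslice, Measure.prod_prod, hl, volume_restrict_Ioi_setOf_ofReal_lt,
          volume_restrict_Ioi_setOf_ofReal_lt]
    _ = (π.prod (l.prod l)) E := (Measure.prod_apply hE).symm
    _ = ∫⁻ p, π ((fun z => (z, p)) ⁻¹' E) ∂(l.prod l) := Measure.prod_apply_symm hE
    _ ≤ ∫⁻ p, C * min (distribution μ f (ENNReal.ofReal p.1))
          (distribution ν g (ENNReal.ofReal p.2)) ∂(l.prod l) := lintegral_mono hmin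
    _ = C * ∫⁻ p, min (distribution μ f (ENNReal.ofReal p.1))
          (distribution ν g (ENNReal.ofReal p.2)) ∂(l.prod l) :=
        lintegral_const_mul _ (((measurable_distribution_ofReal f).comp measurable_fst).min
          ((measurable_distribution_ofReal g).comp measurable_snd))
    _ ≤ C * ∫⁻ t, decRearr μ f t * decRearr ν g t ∂l := by
        gcongr
        exact lintegral_min_distribution_le f g

end DecreasingRearrangement

section LeibnizKernel

variable {Ω : Type*} [MeasurableSpace Ω] {μ : Measure Ω}

lemma enorm_half_add_add_enorm_half_sub (a b : ℝ) :
    ‖(a + b) / 2‖ₑ + ‖(a - b) / 2‖ₑ = max ‖a‖ₑ ‖b‖ₑ := by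
  have habs : |(a + b) / 2| + |(a - b) / 2| = max |a| |b| := by
    rcases abs_cases ((a + b) / 2) with h | h <;> rcases abs_cases ((a - b) / 2) with h' | h' <;>
      rcases abs_cases a with ha | ha <;> rcases abs_cases b with hb | hb <;>
      rcases max_cases |a| |b| with hm | hm <;> linarith
  simp only [Real.enorm_eq_ofReal_abs]
  rw [← ENNReal.ofReal_add (abs_nonneg _) (abs_nonneg _), habs, ENNReal.ofReal_max]

/-- For `G = g - g_Ω`, the mean over `y` of `leibnizKernel f G (x, y)` is the part of
`(fg)(x) - (fg)_Ω` controlled by `‖f‖_∞` and `G`; exchanging `f` and `g` gives the other part. -/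
noncomputable def leibnizKernel (f G : Ω → ℝ) (z : Ω × Ω) : ℝ :=
  (f z.1 + f z.2) / 2 * G z.1 + (f z.1 - f z.2) / 2 * G z.2

/-- The measure on `Ω × Ω` against which `∫ leibnizKernel f G z * h z.1` is estimated: the part of
the kernel multiplying `G z.1` is carried by the diagonal. It is not a coupling of probability
measures, but both its marginals are at most `‖f‖_∞ μ`. -/
noncomputable def leibnizCoupling (μ : Measure Ω) (f : Ω → ℝ) : Measure (Ω × Ω) :=
  ((μ.prod μ).withDensity fun z => ‖(f z.1 + f z.2) / 2‖ₑ).map (fun z => (z.1, z.1)) +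
    (μ.prod μ).withDensity fun z => ‖(f z.1 - f z.2) / 2‖ₑ

instance [SFinite μ] (f : Ω → ℝ) : SFinite (leibnizCoupling μ f) := by
  unfold leibnizCoupling
  infer_instance

lemma lintegral_leibnizCoupling {f : Ω → ℝ} (hf : Measurable f) {F : Ω × Ω → ℝ≥0∞}
    (hF : Measurable F) :
    ∫⁻ z, F z ∂leibnizCoupling μ f =
      ∫⁻ z, ‖(f z.1 + f z.2) / 2‖ₑ * F (z.1, z.1) ∂μ.prod μ +
        ∫⁻ z, ‖(f z.1 - f z.2) / 2‖ₑ * F z ∂μ.prod μ := by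
  rw [leibnizCoupling, lintegral_add_measure, lintegral_map hF (by fun_prop),
    lintegral_withDensity_eq_lintegral_mul _ (by fun_prop) (by fun_prop),
    lintegral_withDensity_eq_lintegral_mul _ (by fun_prop) hF]
  simp only [Pi.mul_apply]

lemma map_swap_leibnizCoupling [SFinite μ] {f : Ω → ℝ} (hf : Measurable f) :
    (leibnizCoupling μ f).map Prod.swap = leibnizCoupling μ f := by
  refine Measure.ext_of_lintegral _ fun F hF => ?_
  rw [lintegral_map hF measurable_swap,
    lintegral_leibnizCoupling hf (F := fun z => F z.swap) (hF.comp measurable_swap),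
    lintegral_leibnizCoupling hf hF,
    ← lintegral_prod_swap fun z => ‖(f z.1 - f z.2) / 2‖ₑ * F z]
  congr 2 with z
  rw [Prod.fst_swap, Prod.snd_swap, ← enorm_neg, ← neg_div, neg_sub]

lemma fst_leibnizCoupling_le [IsProbabilityMeasure μ] {f : Ω → ℝ} (hf : Measurable f) :
    (leibnizCoupling μ f).fst ≤ eLpNorm f ⊤ μ • μ := by
  have hfst : ∀ᵐ z ∂μ.prod μ, ‖f z.1‖ₑ ≤ eLpNorm f ⊤ μ :=
    Measure.quasiMeasurePreserving_fst.ae ae_le_eLpNormEssSup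
  have hsnd : ∀ᵐ z ∂μ.prod μ, ‖f z.2‖ₑ ≤ eLpNorm f ⊤ μ :=
    Measure.quasiMeasurePreserving_snd.ae ae_le_eLpNormEssSup
  calc (leibnizCoupling μ f).fst
      = ((μ.prod μ).withDensity fun z => ‖(f z.1 + f z.2) / 2‖ₑ + ‖(f z.1 - f z.2) / 2‖ₑ).fst := by
        rw [leibnizCoupling, Measure.fst_add, Measure.fst_map_prodMk measurable_fst, ← Measure.fst,
          ← Measure.fst_add, ← withDensity_add_left (by fun_prop)]
        rfl
    _ ≤ ((μ.prod μ).withDensity fun _ => eLpNorm f ⊤ μ).fst := by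
        refine Measure.fst_mono (withDensity_mono ?_)
        filter_upwards [hfst, hsnd] with z h₁ h₂
        rw [enorm_half_add_add_enorm_half_sub]
        exact max_le h₁ h₂
    _ = eLpNorm f ⊤ μ • μ := by
        rw [withDensity_const, Measure.fst, Measure.map_smul, ← Measure.fst, Measure.fst_prod]

lemma snd_leibnizCoupling_le [IsProbabilityMeasure μ] {f : Ω → ℝ} (hf : Measurable f) :
    (leibnizCoupling μ f).snd ≤ eLpNorm f ⊤ μ • μ := by
  rw [← Measure.fst_map_swap, map_swap_leibnizCoupling hf]
  exact fst_leibnizCoupling_le hf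

lemma enorm_integral_leibnizKernel_mul_le [IsProbabilityMeasure μ] {f G h : Ω → ℝ}
    (hf : Measurable f) (hG : Measurable G) (hh : Measurable h) :
    ‖∫ z, leibnizKernel f G z * h z.1 ∂μ.prod μ‖ₑ ≤
      eLpNorm f ⊤ μ * ∫⁻ t in Set.Ioi (0 : ℝ), decRearr μ G t * decRearr μ h t := by
  calc ‖∫ z, leibnizKernel f G z * h z.1 ∂μ.prod μ‖ₑ
      ≤ ∫⁻ z, ‖leibnizKernel f G z * h z.1‖ₑ ∂μ.prod μ := enorm_integral_le_lintegral_enorm _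
    _ ≤ ∫⁻ z, ‖(f z.1 + f z.2) / 2‖ₑ * (‖h z.1‖ₑ * ‖G z.1‖ₑ) +
          ‖(f z.1 - f z.2) / 2‖ₑ * (‖h z.1‖ₑ * ‖G z.2‖ₑ) ∂μ.prod μ := by
        refine lintegral_mono fun z => ?_
        rw [leibnizKernel, add_mul]
        refine (enorm_add_le _ _).trans_eq ?_
        simp only [enorm_mul]
        ring
    _ = ∫⁻ z, ‖h z.1‖ₑ * ‖G z.2‖ₑ ∂leibnizCoupling μ f := by
        rw [lintegral_leibnizCoupling hf (by fun_prop), lintegral_add_left (by fun_prop)]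
    _ ≤ eLpNorm f ⊤ μ * ∫⁻ t in Set.Ioi (0 : ℝ), decRearr μ h t * decRearr μ G t :=
        lintegral_enorm_mul_enorm_le_of_fst_le_of_snd_le (fst_leibnizCoupling_le hf)
          (snd_leibnizCoupling_le hf) hh hG
    _ = eLpNorm f ⊤ μ * ∫⁻ t in Set.Ioi (0 : ℝ), decRearr μ G t * decRearr μ h t := by
        simp only [mul_comm (decRearr μ h _)]

lemma integrable_leibnizKernel_mul [IsFiniteMeasure μ] {f G h : Ω → ℝ}
    (hf : MemLp f ⊤ μ) (hG : MemLp G ⊤ μ) (hh : MemLp h ⊤ μ) :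
    Integrable (fun z => leibnizKernel f G z * h z.1) (μ.prod μ) := by
  have hadd : MemLp (fun z : Ω × Ω => (f z.1 + f z.2) / 2) ⊤ (μ.prod μ) := by
    simpa only [div_eq_mul_inv, Pi.add_apply] using
      ((hf.comp_fst μ).add (hf.comp_snd μ)).mul_const 2⁻¹
  have hsub : MemLp (fun z : Ω × Ω => (f z.1 - f z.2) / 2) ⊤ (μ.prod μ) := by
    simpa only [div_eq_mul_inv, Pi.sub_apply] using
      ((hf.comp_fst μ).sub (hf.comp_snd μ)).mul_const 2⁻¹
  have hker : MemLp (leibnizKernel f G) ⊤ (μ.prod μ) :=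
    ((hG.comp_fst μ).mul hadd).add ((hG.comp_snd μ).mul hsub)
  exact ((hh.comp_fst μ).mul hker).integrable le_top

end LeibnizKernel

section CentredProduct

variable {Ω : Type*} [MeasurableSpace Ω] {μ : Measure Ω} [IsProbabilityMeasure μ]

lemma integral_sub_integral_mul_eq_integral_prod {u h : Ω → ℝ} (hu : Integrable u μ)
    (hh : Integrable h μ) (huh : Integrable (fun x => u x * h x) μ) :
    ∫ x, (u x - ∫ y, u y ∂μ) * h x ∂μ = ∫ z, (u z.1 - u z.2) * h z.1 ∂μ.prod μ := by
  have hfst : Integrable (fun z : Ω × Ω => u z.1 * h z.1) (μ.prod μ) := huh.comp_fst μ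
  have hsnd : Integrable (fun z : Ω × Ω => h z.1 * u z.2) (μ.prod μ) := hh.mul_prod hu
  simp only [sub_mul, mul_comm (u (Prod.snd _))]
  rw [integral_sub huh (hh.const_mul _), integral_const_mul, integral_sub hfst hsnd,
    integral_prod_mul, integral_fun_fst (fun x => u x * h x), probReal_univ, one_smul, mul_comm]

lemma integral_prod_mul_sub_integral_eq_zero (u v : Ω → ℝ) :
    ∫ z, u z.1 * (v z.2 - ∫ y, v y ∂μ) ∂μ.prod μ = 0 := by
  have hv : ∫ x, (v x - ∫ y, v y ∂μ) ∂μ = 0 := by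
    simpa only [average_eq_integral] using integral_sub_average μ v
  rw [integral_prod_mul u (fun x => v x - ∫ y, v y ∂μ), hv, mul_zero]

lemma integral_centered_mul_eq_integral_leibnizKernel {f g h : Ω → ℝ}
    (hf : MemLp f ⊤ μ) (hg : MemLp g ⊤ μ) (hh : MemLp h ⊤ μ) :
    ∫ x, (f x * g x - ∫ y, f y * g y ∂μ) * h x ∂μ =
      ∫ z, leibnizKernel f (fun x => g x - ∫ y, g y ∂μ) z * h z.1 ∂μ.prod μ +
        ∫ z, leibnizKernel g (fun x => f x - ∫ y, f y ∂μ) z * h z.1 ∂μ.prod μ := by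
  set F : Ω → ℝ := fun x => f x - ∫ y, f y ∂μ with hF
  set G : Ω → ℝ := fun x => g x - ∫ y, g y ∂μ with hG
  have hfg : MemLp (fun x => f x * g x) ⊤ μ := hg.mul hf
  have hfh : MemLp (fun x => f x * h x) ⊤ μ := hh.mul hf
  have hgh : MemLp (fun x => g x * h x) ⊤ μ := hh.mul hg
  have hfgh : MemLp (fun x => f x * g x * h x) ⊤ μ := hh.mul hfg
  have hFm : MemLp F ⊤ μ := hf.sub (memLp_const _)
  have hGm : MemLp G ⊤ μ := hg.sub (memLp_const _)
  have hKf := integrable_leibnizKernel_mul hf hGm hh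
  have hKg := integrable_leibnizKernel_mul hg hFm hh
  have hfhG : Integrable (fun z : Ω × Ω => f z.1 * h z.1 * G z.2) (μ.prod μ) :=
    (hfh.integrable le_top).mul_prod (hGm.integrable le_top)
  have hghF : Integrable (fun z : Ω × Ω => g z.1 * h z.1 * F z.2) (μ.prod μ) :=
    (hgh.integrable le_top).mul_prod (hFm.integrable le_top)
  calc ∫ x, (f x * g x - ∫ y, f y * g y ∂μ) * h x ∂μ
      = ∫ z, (f z.1 * g z.1 - f z.2 * g z.2) * h z.1 ∂μ.prod μ :=
        integral_sub_integral_mul_eq_integral_prod (hfg.integrable le_top)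
          (hh.integrable le_top) (hfgh.integrable le_top)
    _ = ∫ z, (leibnizKernel f G z * h z.1 + leibnizKernel g F z * h z.1) -
          (f z.1 * h z.1 * G z.2 + g z.1 * h z.1 * F z.2) ∂μ.prod μ := by
        congr 1 with z
        simp only [leibnizKernel, hF, hG]
        ring
    _ = ∫ z, leibnizKernel f G z * h z.1 ∂μ.prod μ +
          ∫ z, leibnizKernel g F z * h z.1 ∂μ.prod μ := by
        rw [integral_sub (by exact hKf.add hKg) (by exact hfhG.add hghF), integral_add hKf hKg,
          integral_add hfhG hghF, integral_prod_mul_sub_integral_eq_zero (fun x => f x * h x) g,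
          integral_prod_mul_sub_integral_eq_zero (fun x => g x * h x) f, add_zero, sub_zero]

lemma enorm_integral_centered_mul_le {f g h : Ω → ℝ} (hfm : Measurable f) (hgm : Measurable g)
    (hhm : Measurable h) (hf : MemLp f ⊤ μ) (hg : MemLp g ⊤ μ) (hh : MemLp h ⊤ μ) :
    ‖∫ x, (f x * g x - ∫ y, f y * g y ∂μ) * h x ∂μ‖ₑ ≤
      eLpNorm f ⊤ μ * (∫⁻ t in Set.Ioi (0 : ℝ),
        decRearr μ (fun x => g x - ∫ y, g y ∂μ) t * decRearr μ h t) +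
      eLpNorm g ⊤ μ * (∫⁻ t in Set.Ioi (0 : ℝ),
        decRearr μ (fun x => f x - ∫ y, f y ∂μ) t * decRearr μ h t) := by
  rw [integral_centered_mul_eq_integral_leibnizKernel hf hg hh]
  exact (enorm_add_le _ _).trans (add_le_add
    (enorm_integral_leibnizKernel_mul_le hfm (hgm.sub_const _) hhm)
    (enorm_integral_leibnizKernel_mul_le hgm (hfm.sub_const _) hhm))

end CentredProduct

section Duality

open Filter ProbabilityTheory Topology

variable {Ω : Type*} [MeasurableSpace Ω] {μ : Measure Ω}

lemma exists_measurable_ae_mul_eq {u h : Ω → ℝ} (hu : Measurable u)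
    (huh : AEMeasurable (fun x => u x * h x) μ) :
    ∃ k : Ω → ℝ, Measurable k ∧ ∀ᵐ x ∂μ, u x * k x = u x * h x ∧ |k x| ≤ |h x| := by
  refine ⟨fun x => huh.mk _ x / u x, huh.measurable_mk.div hu, ?_⟩
  filter_upwards [huh.ae_eq_mk] with x hx
  rw [← hx]
  rcases eq_or_ne (u x) 0 with h₀ | h₀
  · simp only [h₀, zero_mul, _root_.div_zero, abs_zero, abs_nonneg, and_self]
  · rw [mul_div_cancel_left₀ _ h₀]
    exact ⟨rfl, le_rfl⟩

lemma exists_memLp_top_tendsto_integral_mul {u : Ω → ℝ} (hu : Measurable u) (h : Ω → ℝ) :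
    ∃ k : ℕ → Ω → ℝ, (∀ n, Measurable (k n) ∧ MemLp (k n) ⊤ μ ∧ ∀ᵐ x ∂μ, |k n x| ≤ |h x|) ∧
      Tendsto (fun n => ∫ x, u x * k n x ∂μ) atTop (𝓝 (∫ x, u x * h x ∂μ)) := by
  by_cases hint : Integrable (fun x => u x * h x) μ
  swap
  · refine ⟨0, fun _ => ⟨measurable_zero, MemLp.zero, ?_⟩, ?_⟩
    · filter_upwards with x
      exact abs_zero.trans_le (abs_nonneg _)
    · simp only [integral_undef hint, Pi.zero_apply, mul_zero, integral_zero, tendsto_const_nhds]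
  obtain ⟨v, hv, huv⟩ := exists_measurable_ae_mul_eq hu hint.aemeasurable
  have hmeas (n : ℕ) : Measurable (truncation v n) :=
    (measurable_id.indicator measurableSet_Ioc).comp hv
  refine ⟨fun n => truncation v n, fun n => ⟨hmeas n, ?_, ?_⟩, ?_⟩
  · exact memLp_top_of_bound (hmeas n).aestronglyMeasurable |(n : ℝ)|
      (ae_of_all _ (abs_truncation_le_bound v n))
  · filter_upwards [huv] with x hx
    exact (abs_truncation_le_abs_self v n x).trans hx.2
  · refine tendsto_integral_of_dominated_convergence (fun x => ‖u x * h x‖)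
      (fun n => (hu.mul (hmeas n)).aestronglyMeasurable) hint.norm (fun n => ?_) ?_
    · filter_upwards [huv] with x hx
      rw [← hx.1, norm_mul, norm_mul]
      exact mul_le_mul_of_nonneg_left (abs_truncation_le_abs_self v n x) (norm_nonneg _)
    · filter_upwards [huv] with x hx
      rw [← hx.1]
      refine tendsto_const_nhds.congr' ?_
      filter_upwards [tendsto_natCast_atTop_atTop.eventually_gt_atTop |v x|] with n hn
      rw [truncation_eq_self hn]

/-- The associate functional `N'` of `N`, defined for arbitrary, possibly non-measurable,
functions `h`. -/
noncomputable def associateNorm (μ : Measure Ω) (N : (Ω → ℝ) → ℝ≥0∞) (h : Ω → ℝ) : ℝ≥0∞ :=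
  ⨆ (g : Ω → ℝ) (_ : N g ≤ 1), ∫⁻ x, ENNReal.ofReal |g x * h x| ∂μ

lemma associateNorm_mono_ae (N : (Ω → ℝ) → ℝ≥0∞) {k h : Ω → ℝ}
    (hkh : ∀ᵐ x ∂μ, |k x| ≤ |h x|) : associateNorm μ N k ≤ associateNorm μ N h := by
  refine iSup₂_mono fun g _ => lintegral_mono_ae ?_
  filter_upwards [hkh] with x hx
  rw [abs_mul, abs_mul]
  gcongr

lemma iSup_ofReal_integral_mul_le_of_forall_memLp_top {N : (Ω → ℝ) → ℝ≥0∞} {u : Ω → ℝ}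
    (hu : Measurable u) {B : ℝ≥0∞}
    (hB : ∀ k, Measurable k → MemLp k ⊤ μ → associateNorm μ N k ≤ 1 →
      ENNReal.ofReal (∫ x, u x * k x ∂μ) ≤ B) :
    ⨆ (h : Ω → ℝ) (_ : associateNorm μ N h ≤ 1), ENNReal.ofReal (∫ x, u x * h x ∂μ) ≤ B := by
  refine iSup₂_le fun h hh => ?_
  obtain ⟨k, hk, hlim⟩ := exists_memLp_top_tendsto_integral_mul (μ := μ) hu h
  exact le_of_tendsto' (ENNReal.tendsto_ofReal hlim) fun n =>
    hB (k n) (hk n).1 (hk n).2.1 ((associateNorm_mono_ae N (hk n).2.2).trans hh)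

end Duality

/-- Theorem 4.3 (first part), stated with the abstract properties of a rearrangement
invariant norm used in its proof: if `N` satisfies the Lorentz–Luxemburg duality
representation and Hölder's inequality via decreasing rearrangements (with associate
functional `N'(h) = sup {∫ |g h| dμ : N(g) ≤ 1}`), then for bounded measurable real
`f, g` on a probability space,
`N(fg - (fg)_Ω) ≤ ‖f‖_∞ N(g - g_Ω) + ‖g‖_∞ N(f - f_Ω)`. -/
theorem leibniz_rule_rearrangement_invariant_norm
    {Ω : Type*} [MeasurableSpace Ω] (μ : Measure Ω) [IsProbabilityMeasure μ]
    (N N' : (Ω → ℝ) → ℝ≥0∞)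
    (hN' : ∀ h : Ω → ℝ,
      N' h = ⨆ (g : Ω → ℝ) (_ : N g ≤ 1), ∫⁻ x, ENNReal.ofReal |g x * h x| ∂μ)
    (hdual : ∀ u : Ω → ℝ, Measurable u →
      N u = ⨆ (h : Ω → ℝ) (_ : N' h ≤ 1), ENNReal.ofReal (∫ x, u x * h x ∂μ))
    (hHolder : ∀ u v : Ω → ℝ, Measurable u → Measurable v →
      ∫⁻ t in Set.Ioi (0 : ℝ), decRearr μ u t * decRearr μ v t ≤ N u * N' v)
    (f g : Ω → ℝ) (hf : Measurable f) (hg : Measurable g)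
    (hfb : ∃ C : ℝ, ∀ x, |f x| ≤ C) (hgb : ∃ C : ℝ, ∀ x, |g x| ≤ C) :
    N (fun x => f x * g x - ∫ y, f y * g y ∂μ) ≤
      eLpNorm f ⊤ μ * N (fun x => g x - ∫ y, g y ∂μ) +
      eLpNorm g ⊤ μ * N (fun x => f x - ∫ y, f y ∂μ) := by
  obtain rfl : N' = associateNorm μ N := funext hN'
  have memLp_top_of_bdd {u : Ω → ℝ} (hu : Measurable u) : (∃ C : ℝ, ∀ x, |u x| ≤ C) → MemLp u ⊤ μ :=
    fun ⟨C, hC⟩ => memLp_top_of_bound hu.aestronglyMeasurable C (ae_of_all _ hC)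
  have hfg : Measurable fun x => f x * g x - ∫ y, f y * g y ∂μ := (hf.mul hg).sub_const _
  rw [hdual _ hfg]
  refine iSup_ofReal_integral_mul_le_of_forall_memLp_top hfg fun h hhm hh hh1 => ?_
  have rearr_le {v : Ω → ℝ} (hv : Measurable v) :
      ∫⁻ t in Set.Ioi (0 : ℝ), decRearr μ v t * decRearr μ h t ≤ N v :=
    (hHolder v h hv hhm).trans (mul_le_of_le_one_right' hh1)
  refine (Real.ofReal_le_enorm _).trans ((enorm_integral_centered_mul_le hf hg hhm
    (memLp_top_of_bdd hf hfb) (memLp_top_of_bdd hg hgb) hh).trans ?_)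
  gcongr
  · exact rearr_le (hg.sub_const _)
  · exact rearr_le (hf.sub_const _)
end

section
/- Let (Ω, 𝓕, μ) be a probability space. Let N be a map from real-valued measurable functions on Ω to [0, ∞], and define the associate functional N'(h) := sup { ∫_Ω |g h| dμ : N(g) ≤ 1 }. Assume that for all measurable u, v one has ∫_Ω |u v| dμ ≤ ∫_0^∞ u*(t) v*(t) dt ≤ N(u) · N'(v) (Hardy–Littlewood and Hölder inequalities via decreasing rearrangements). Then for all real-valued bounded measurable f, g on Ω, ‖fg − (fg)_Ω‖_1 ≤ N(f) · N'(g − g_Ω) + N'(g) · N(f − f_Ω). -/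
open MeasureTheory ENNReal

/-!
Hardy–Littlewood holds on any measure space, and rearrangements are invariant under
measure-preserving maps. Hence `∫ |u ∘ φ| |v ∘ ψ| ≤ ∫₀^∞ u* v*` whenever `φ` and `ψ` preserve
measure.

Put `h = fg` and let `s = ±1` be the sign of `h - h_Ω`, so that `‖h - h_Ω‖₁ = ∫ s h - s_Ω h_Ω`.
This difference is a sum of two integrals over `Ω × Ω` with integrands
`± f(φ(x, y)) (g - g_Ω)(x)` and `± g(φ(x, y)) (f - f_Ω)(x)`, where `φ(x, y)` is `y` if
`s(x) = s(y)` and `x` otherwise. The map `φ` preserves measure because the condition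
`s(x) = s(y)` is symmetric in `x` and `y`.
-/

section Rearrangement

variable {Ω : Type*} [MeasurableSpace Ω] {μ : Measure Ω}

/-- The distribution function `s ↦ μ {|f| > s}`, of which `decRearr μ f` is the generalized
inverse. -/
noncomputable def distribFun (μ : Measure Ω) (f : Ω → ℝ) (s : ℝ≥0∞) : ℝ≥0∞ :=
  μ {x | s < ENNReal.ofReal |f x|}

lemma distribFun_antitone (μ : Measure Ω) (f : Ω → ℝ) : Antitone (distribFun μ f) :=
  fun _ _ hst => measure_mono fun _ hx => lt_of_le_of_lt hst hx

lemma decRearr_antitone (μ : Measure Ω) (f : Ω → ℝ) : Antitone (decRearr μ f) :=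
  fun _ _ hst => sInf_le_sInf fun _ hS => le_trans hS (ENNReal.ofReal_le_ofReal hst)

lemma lintegral_enorm_eq_lintegral_distribFun {f : Ω → ℝ} (hf : AEMeasurable f μ) :
    ∫⁻ x, ‖f x‖ₑ ∂μ = ∫⁻ s in Set.Ioi (0 : ℝ), distribFun μ f (ENNReal.ofReal s) := by
  simp_rw [Real.enorm_eq_ofReal_abs]
  rw [lintegral_eq_lintegral_meas_lt μ (.of_forall fun _ => abs_nonneg _) (by fun_prop)]
  refine setLIntegral_congr_fun measurableSet_Ioi fun s hs => ?_
  simp only [distribFun, ENNReal.ofReal_lt_ofReal_iff_of_nonneg (le_of_lt hs)]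

lemma volume_restrict_Ioi_ofReal_lt (a : ℝ≥0∞) :
    volume.restrict (Set.Ioi (0 : ℝ)) {r | ENNReal.ofReal r < a} = a := by
  rw [Measure.restrict_apply (measurableSet_lt ENNReal.measurable_ofReal measurable_const)]
  rcases eq_or_ne a ∞ with rfl | ha
  · simp
  have hIoo : {r | ENNReal.ofReal r < a} ∩ Set.Ioi (0 : ℝ) = Set.Ioo 0 a.toReal := by
    ext r
    rw [Set.mem_inter_iff, and_comm]
    exact and_congr_right fun hr => ENNReal.ofReal_lt_iff_lt_toReal (le_of_lt hr) ha
  rw [hIoo, Real.volume_Ioo, sub_zero, ENNReal.ofReal_toReal ha]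

lemma volume_lt_distribFun_le_decRearr (μ : Measure Ω) (f : Ω → ℝ) (r : ℝ) :
    volume.restrict (Set.Ioi (0 : ℝ))
      {s | ENNReal.ofReal r < distribFun μ f (ENNReal.ofReal s)} ≤ decRearr μ f r := by
  refine le_sInf fun S hS => ?_
  rw [← volume_restrict_Ioi_ofReal_lt S]
  exact measure_mono fun s hs => (distribFun_antitone μ f).reflect_lt (lt_of_le_of_lt hS hs)

lemma lintegral_setLIntegral_lt_distribFun_le (μ : Measure Ω) (f : Ω → ℝ) {w : ℝ → ℝ≥0∞}
    (hw : Measurable w) :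
    ∫⁻ s in Set.Ioi (0 : ℝ), ∫⁻ r in {r | ENNReal.ofReal r < distribFun μ f (ENNReal.ofReal s)},
        w r ∂(volume.restrict (Set.Ioi 0)) ≤
      ∫⁻ r in Set.Ioi (0 : ℝ), w r * decRearr μ f r := by
  set P : Set (ℝ × ℝ) := {p | ENNReal.ofReal p.2 < distribFun μ f (ENNReal.ofReal p.1)}
  have hD : Measurable (distribFun μ f) := (distribFun_antitone μ f).measurable
  have hP : MeasurableSet P := measurableSet_lt (by fun_prop) (by fun_prop)
  calc _ = ∫⁻ s in Set.Ioi (0 : ℝ), ∫⁻ r in Set.Ioi 0, P.indicator (fun p => w p.2) (s, r) :=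
        lintegral_congr fun s =>
          (lintegral_indicator (measurable_prodMk_left hP : MeasurableSet (Prod.mk s ⁻¹' P)) w).symm
    _ = ∫⁻ r in Set.Ioi (0 : ℝ), ∫⁻ s in Set.Ioi 0, P.indicator (fun p => w p.2) (s, r) :=
        lintegral_lintegral_swap ((hw.comp measurable_snd).indicator hP).aemeasurable
    _ = ∫⁻ r in Set.Ioi (0 : ℝ), w r * volume.restrict (Set.Ioi 0) ((fun s => (s, r)) ⁻¹' P) :=
        lintegral_congr fun r => lintegral_indicator_const (measurable_prodMk_right hP) (w r)
    _ ≤ _ := lintegral_mono fun r => mul_le_mul_right (volume_lt_distribFun_le_decRearr μ f r) _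

lemma setLIntegral_enorm_le_setLIntegral_decRearr {f : Ω → ℝ} (hf : AEMeasurable f μ)
    (E : Set Ω) :
    ∫⁻ x in E, ‖f x‖ₑ ∂μ ≤
      ∫⁻ r in {r | ENNReal.ofReal r < μ E}, decRearr μ f r ∂(volume.restrict (Set.Ioi 0)) := by
  have hE : MeasurableSet {r | ENNReal.ofReal r < μ E} :=
    measurableSet_lt ENNReal.measurable_ofReal measurable_const
  calc ∫⁻ x in E, ‖f x‖ₑ ∂μ
      = ∫⁻ s in Set.Ioi (0 : ℝ), distribFun (μ.restrict E) f (ENNReal.ofReal s) :=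
        lintegral_enorm_eq_lintegral_distribFun hf.restrict
    _ ≤ ∫⁻ s in Set.Ioi (0 : ℝ), min (μ E) (distribFun μ f (ENNReal.ofReal s)) :=
        lintegral_mono fun s => le_min
          ((measure_mono (Set.subset_univ _)).trans_eq (Measure.restrict_apply_univ E))
          (Measure.restrict_le_self _)
    _ = ∫⁻ s in Set.Ioi (0 : ℝ),
          ∫⁻ r in {r | ENNReal.ofReal r < distribFun μ f (ENNReal.ofReal s)},
            {r | ENNReal.ofReal r < μ E}.indicator 1 r ∂(volume.restrict (Set.Ioi 0)) :=
        lintegral_congr fun s => by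
          rw [lintegral_indicator_one hE, Measure.restrict_apply hE,
            ← volume_restrict_Ioi_ofReal_lt (min _ _)]
          simp only [lt_min_iff, Set.ofPred_and]
    _ ≤ ∫⁻ r in Set.Ioi (0 : ℝ), {r | ENNReal.ofReal r < μ E}.indicator 1 r * decRearr μ f r :=
        lintegral_setLIntegral_lt_distribFun_le μ f (measurable_one.indicator hE)
    _ = _ := by
        rw [← lintegral_indicator hE]
        exact lintegral_congr fun r => by
          by_cases hr : r ∈ {r | ENNReal.ofReal r < μ E} <;> simp [hr]

theorem lintegral_enorm_mul_le_lintegral_decRearr_mul {u v : Ω → ℝ} (hu : AEMeasurable u μ)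
    (hv : AEMeasurable v μ) :
    ∫⁻ x, ‖u x * v x‖ₑ ∂μ ≤ ∫⁻ t in Set.Ioi (0 : ℝ), decRearr μ u t * decRearr μ v t := by
  have hac : μ.withDensity (fun x => ‖v x‖ₑ) ≪ μ := withDensity_absolutelyContinuous μ _
  have hset (s : ℝ) : NullMeasurableSet {x | ENNReal.ofReal s < ENNReal.ofReal |u x|} μ :=
    nullMeasurableSet_lt aemeasurable_const (by fun_prop)
  calc ∫⁻ x, ‖u x * v x‖ₑ ∂μ
      = ∫⁻ x, ‖u x‖ₑ ∂(μ.withDensity fun x => ‖v x‖ₑ) := by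
        rw [lintegral_withDensity_eq_lintegral_mul₀ (by fun_prop) (by fun_prop)]
        simp only [enorm_mul, Pi.mul_apply, mul_comm]
    _ = ∫⁻ s in Set.Ioi (0 : ℝ),
          ∫⁻ x in {x | ENNReal.ofReal s < ENNReal.ofReal |u x|}, ‖v x‖ₑ ∂μ := by
        rw [lintegral_enorm_eq_lintegral_distribFun (hu.mono_ac hac)]
        exact lintegral_congr fun s => withDensity_apply₀ _ (hset s)
    _ ≤ ∫⁻ s in Set.Ioi (0 : ℝ),
          ∫⁻ r in {r | ENNReal.ofReal r < distribFun μ u (ENNReal.ofReal s)},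
            decRearr μ v r ∂(volume.restrict (Set.Ioi 0)) :=
        lintegral_mono fun s => setLIntegral_enorm_le_setLIntegral_decRearr hv _
    _ ≤ ∫⁻ r in Set.Ioi (0 : ℝ), decRearr μ v r * decRearr μ u r :=
        lintegral_setLIntegral_lt_distribFun_le μ u (decRearr_antitone μ v).measurable
    _ = _ := by simp only [mul_comm]

lemma decRearr_comp_measurePreserving {Ω' : Type*} [MeasurableSpace Ω'] {ν : Measure Ω'}
    {φ : Ω' → Ω} (hφ : MeasurePreserving φ ν μ) {f : Ω → ℝ} (hf : AEMeasurable f μ) :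
    decRearr ν (f ∘ φ) = decRearr μ f := by
  funext t
  have hset (s : ℝ≥0∞) : NullMeasurableSet {x | s < ENNReal.ofReal |f x|} μ :=
    nullMeasurableSet_lt aemeasurable_const (by fun_prop)
  have hdistrib (s : ℝ≥0∞) : ν {y | s < ENNReal.ofReal |(f ∘ φ) y|} =
      μ {x | s < ENNReal.ofReal |f x|} := hφ.measure_preimage (hset s)
  simp only [decRearr, hdistrib]

theorem lintegral_enorm_comp_mul_comp_le_lintegral_decRearr_mul {Ω' : Type*} [MeasurableSpace Ω']
    {ν : Measure Ω'} {φ ψ : Ω' → Ω} (hφ : MeasurePreserving φ ν μ) (hψ : MeasurePreserving ψ ν μ)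
    {u v : Ω → ℝ} (hu : AEMeasurable u μ) (hv : AEMeasurable v μ) :
    ∫⁻ y, ‖u (φ y) * v (ψ y)‖ₑ ∂ν ≤
      ∫⁻ t in Set.Ioi (0 : ℝ), decRearr μ u t * decRearr μ v t := by
  rw [← decRearr_comp_measurePreserving hφ hu, ← decRearr_comp_measurePreserving hψ hv]
  exact lintegral_enorm_mul_le_lintegral_decRearr_mul
    (hu.comp_quasiMeasurePreserving hφ.quasiMeasurePreserving)
    (hv.comp_quasiMeasurePreserving hψ.quasiMeasurePreserving)

end Rearrangement

section Preliminaries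

variable {Ω : Type*} [MeasurableSpace Ω] {μ : Measure Ω}

lemma integral_mul_sub_const {w v : Ω → ℝ} (hw : Integrable w μ)
    (hwv : Integrable (fun x => w x * v x) μ) (c : ℝ) :
    ∫ x, w x * (v x - c) ∂μ = (∫ x, w x * v x ∂μ) - (∫ x, w x ∂μ) * c := by
  simp_rw [mul_sub]
  rw [integral_sub hwv (hw.mul_const c), integral_mul_const]

lemma exists_measurable_abs_eq_one_mul_eq_abs {f : Ω → ℝ} (hf : AEMeasurable f μ) :
    ∃ s : Ω → ℝ, Measurable s ∧ (∀ x, |s x| = 1) ∧ ∀ᵐ x ∂μ, s x * f x = |f x| := by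
  refine ⟨fun x => if 0 ≤ hf.mk f x then 1 else -1,
    .ite (measurableSet_le measurable_const hf.measurable_mk) measurable_const measurable_const,
    fun x => by dsimp only; split_ifs <;> simp, ?_⟩
  filter_upwards [hf.ae_eq_mk] with x hx
  rw [← hx]
  split_ifs with h
  · rw [one_mul, abs_of_nonneg h]
  · rw [neg_one_mul, abs_of_neg (not_le.1 h)]

lemma measurePreserving_piecewise_snd_fst [IsProbabilityMeasure μ] {S : Set (Ω × Ω)}
    [DecidablePred (· ∈ S)] (hS : MeasurableSet S) (hsymm : Prod.swap ⁻¹' S = S) :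
    MeasurePreserving (S.piecewise Prod.snd Prod.fst) (μ.prod μ) μ := by
  refine ⟨measurable_snd.piecewise hS measurable_fst, Measure.ext fun E hE => ?_⟩
  have hswap : μ.prod μ (Prod.snd ⁻¹' E ∩ S) = μ.prod μ (Prod.fst ⁻¹' E ∩ S) := by
    rw [← Measure.measurePreserving_swap.measure_preimage
      ((measurable_snd hE).inter hS).nullMeasurableSet, Set.preimage_inter, hsymm]
    rfl
  rw [Measure.map_apply (measurable_snd.piecewise hS measurable_fst) hE, Set.piecewise_preimage,
    Set.ite, measure_union (Set.disjoint_sdiff_right.mono_left Set.inter_subset_right)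
      ((measurable_fst hE).diff hS), hswap, measure_inter_add_sdiff _ hS,
    measurePreserving_fst.measure_preimage hE.nullMeasurableSet]

end Preliminaries

section CrossKernel

variable {Ω : Type*}

/-- The integrand on `Ω × Ω` behind the Leibniz rule. When `s` takes the values `±1`, one of its
two summands vanishes at each `(x, y)`, and what is left is `± u(x) v(x)` or `± u(y) v(x)`. -/
noncomputable def crossKernel (s u v : Ω → ℝ) (p : Ω × Ω) : ℝ :=
  (s p.1 - s p.2) / 2 * (u p.1 * v p.1) + (s p.1 + s p.2) / 2 * (u p.2 * v p.1)

open Classical in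
lemma abs_crossKernel {s : Ω → ℝ} (hs : ∀ x, |s x| = 1) (u v : Ω → ℝ) (p : Ω × Ω) :
    |crossKernel s u v p| = |u ({p | s p.1 = s p.2}.piecewise Prod.snd Prod.fst p) * v p.1| := by
  by_cases hp : p ∈ {p : Ω × Ω | s p.1 = s p.2}
  · have heq : s p.1 = s p.2 := hp
    rw [Set.piecewise_eq_of_mem _ _ _ hp, crossKernel, heq, sub_self, add_self_div_two, zero_div,
      zero_mul, zero_add, abs_mul, hs, one_mul]
  · have hneg : s p.2 = -s p.1 := by
      linarith [(abs_eq_abs.1 ((hs p.1).trans (hs p.2).symm)).resolve_left hp]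
    rw [Set.piecewise_eq_of_notMem _ _ _ hp, crossKernel, hneg, sub_neg_eq_add, add_self_div_two,
      add_neg_cancel, zero_div, zero_mul, add_zero, abs_mul, hs, one_mul]

variable [MeasurableSpace Ω] {μ : Measure Ω} [IsProbabilityMeasure μ]

lemma enorm_integral_crossKernel_le {s u v : Ω → ℝ} (hsm : Measurable s) (hs : ∀ x, |s x| = 1)
    (hu : AEMeasurable u μ) (hv : AEMeasurable v μ) :
    ‖∫ p, crossKernel s u v p ∂(μ.prod μ)‖ₑ ≤
      ∫⁻ t in Set.Ioi (0 : ℝ), decRearr μ u t * decRearr μ v t := by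
  classical
  have hS : MeasurableSet {p : Ω × Ω | s p.1 = s p.2} :=
    measurableSet_eq_fun (by fun_prop) (by fun_prop)
  have hsymm : Prod.swap ⁻¹' {p : Ω × Ω | s p.1 = s p.2} = {p | s p.1 = s p.2} :=
    Set.ext fun _ => eq_comm
  refine (enorm_integral_le_lintegral_enorm _).trans ?_
  simp_rw [Real.enorm_eq_ofReal_abs, abs_crossKernel hs, ← Real.enorm_eq_ofReal_abs]
  exact lintegral_enorm_comp_mul_comp_le_lintegral_decRearr_mul
    (measurePreserving_piecewise_snd_fst hS hsymm) measurePreserving_fst hu hv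

lemma integral_crossKernel {s u v : Ω → ℝ} {C : ℝ} (hs : AEStronglyMeasurable s μ)
    (hsC : ∀ᵐ x ∂μ, ‖s x‖ ≤ C) (hu : Integrable u μ) (hv : Integrable v μ)
    (huv : Integrable (fun x => u x * v x) μ) :
    ∫ p, crossKernel s u v p ∂(μ.prod μ) =
      ((∫ x, s x * (u x * v x) ∂μ) - (∫ x, u x * v x ∂μ) * (∫ x, s x ∂μ) +
        (∫ x, s x * v x ∂μ) * (∫ x, u x ∂μ) + (∫ x, v x ∂μ) * ∫ x, s x * u x ∂μ) / 2 := by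
  have hsplit (p : Ω × Ω) : crossKernel s u v p =
      (s p.1 * (u p.1 * v p.1) - u p.1 * v p.1 * s p.2 + s p.1 * v p.1 * u p.2 +
        v p.1 * (s p.2 * u p.2)) / 2 := by
    rw [crossKernel]
    ring
  have h_suv : Integrable (fun p : Ω × Ω => s p.1 * (u p.1 * v p.1)) (μ.prod μ) :=
    (huv.bdd_mul hs hsC).comp_fst μ
  have h_uv_s : Integrable (fun p : Ω × Ω => u p.1 * v p.1 * s p.2) (μ.prod μ) :=
    huv.mul_prod (.of_bound hs C hsC)
  have h_sv_u : Integrable (fun p : Ω × Ω => s p.1 * v p.1 * u p.2) (μ.prod μ) :=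
    (hv.bdd_mul hs hsC).mul_prod hu
  have h_v_su : Integrable (fun p : Ω × Ω => v p.1 * (s p.2 * u p.2)) (μ.prod μ) :=
    hv.mul_prod (hu.bdd_mul hs hsC)
  simp_rw [hsplit]
  rw [integral_div, integral_add ((h_suv.sub' h_uv_s).fun_add h_sv_u) h_v_su,
    integral_add (h_suv.sub' h_uv_s) h_sv_u, integral_sub h_suv h_uv_s,
    integral_prod_mul (fun x => u x * v x) s, integral_prod_mul (fun x => s x * v x) u,
    integral_prod_mul v (fun x => s x * u x),
    integral_fun_fst (μ := μ) (ν := μ) (fun x => s x * (u x * v x)), probReal_univ, one_smul]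

lemma integral_crossKernel_sub_integral {s u v : Ω → ℝ} {C : ℝ} (hs : AEStronglyMeasurable s μ)
    (hsC : ∀ᵐ x ∂μ, ‖s x‖ ≤ C) (hu : Integrable u μ) (hv : Integrable v μ)
    (huv : Integrable (fun x => u x * v x) μ) :
    ∫ p, crossKernel s u (fun x => v x - ∫ y, v y ∂μ) p ∂(μ.prod μ) =
      ((∫ x, s x * (u x * v x) ∂μ) - (∫ x, u x * v x ∂μ) * (∫ x, s x ∂μ) +
        (∫ x, s x * v x ∂μ) * (∫ x, u x ∂μ) - (∫ x, v x ∂μ) * ∫ x, s x * u x ∂μ) / 2 := by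
  have hsuv : Integrable (fun x => s x * u x * v x) μ := by
    simpa only [mul_assoc] using huv.bdd_mul hs hsC
  have hv₀ : ∫ x, (v x - ∫ y, v y ∂μ) ∂μ = 0 := by
    rw [integral_sub hv (integrable_const _), integral_const, probReal_univ, one_smul, sub_self]
  have huv' : Integrable (fun x => u x * (v x - ∫ y, v y ∂μ)) μ := by
    simpa only [mul_sub] using huv.sub' (hu.mul_const _)
  rw [integral_crossKernel hs hsC hu (hv.sub' (integrable_const _)) huv', hv₀,
    integral_mul_sub_const hu huv,
    integral_mul_sub_const (.of_bound hs C hsC) (hv.bdd_mul hs hsC)]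
  simp only [← mul_assoc (s _)]
  rw [integral_mul_sub_const (hu.bdd_mul hs hsC) hsuv]
  ring

lemma integral_crossKernel_add_integral_crossKernel {s u v : Ω → ℝ} {C : ℝ}
    (hs : AEStronglyMeasurable s μ) (hsC : ∀ᵐ x ∂μ, ‖s x‖ ≤ C) (hu : Integrable u μ)
    (hv : Integrable v μ) (huv : Integrable (fun x => u x * v x) μ) :
    ∫ p, crossKernel s u (fun x => v x - ∫ y, v y ∂μ) p ∂(μ.prod μ) +
        ∫ p, crossKernel s v (fun x => u x - ∫ y, u y ∂μ) p ∂(μ.prod μ) =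
      ∫ x, s x * (u x * v x - ∫ y, u y * v y ∂μ) ∂μ := by
  have hvu : Integrable (fun x => v x * u x) μ := by simpa only [mul_comm] using huv
  rw [integral_crossKernel_sub_integral hs hsC hu hv huv,
    integral_crossKernel_sub_integral hs hsC hv hu hvu,
    integral_mul_sub_const (.of_bound hs C hsC) (huv.bdd_mul hs hsC)]
  -- The last two terms of `integral_crossKernel_sub_integral` are antisymmetric in `u` and `v`.
  simp only [mul_comm (v _) (u _)]
  ring

end CrossKernel

theorem leibniz_rule_associate_space_general {Ω : Type*} [MeasurableSpace Ω] {μ : Measure Ω}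
    [IsProbabilityMeasure μ] {f g : Ω → ℝ} (hf : Integrable f μ) (hg : Integrable g μ)
    (hfg : Integrable (fun x => f x * g x) μ) :
    eLpNorm (fun x => f x * g x - ∫ y, f y * g y ∂μ) 1 μ ≤
      (∫⁻ t in Set.Ioi (0 : ℝ), decRearr μ f t * decRearr μ (fun x => g x - ∫ y, g y ∂μ) t) +
      ∫⁻ t in Set.Ioi (0 : ℝ), decRearr μ (fun x => f x - ∫ y, f y ∂μ) t * decRearr μ g t := by
  simp_rw [mul_comm _ (decRearr μ g _)]
  have hint : Integrable (fun x => f x * g x - ∫ y, f y * g y ∂μ) μ :=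
    hfg.sub (integrable_const _)
  obtain ⟨s, hsm, hs, hs_mul⟩ := exists_measurable_abs_eq_one_mul_eq_abs hint.aemeasurable
  calc eLpNorm (fun x => f x * g x - ∫ y, f y * g y ∂μ) 1 μ
      = ‖∫ x, ‖f x * g x - ∫ y, f y * g y ∂μ‖ ∂μ‖ₑ := by
        rw [eLpNorm_one_eq_lintegral_enorm, ← ofReal_integral_norm_eq_lintegral_enorm hint,
          Real.enorm_of_nonneg (integral_nonneg fun _ => norm_nonneg _)]
    _ = ‖∫ p, crossKernel s f (fun x => g x - ∫ y, g y ∂μ) p ∂(μ.prod μ) +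
          ∫ p, crossKernel s g (fun x => f x - ∫ y, f y ∂μ) p ∂(μ.prod μ)‖ₑ := by
        rw [integral_crossKernel_add_integral_crossKernel hsm.aestronglyMeasurable
          (.of_forall fun x => (hs x).le) hf hg hfg, integral_congr_ae hs_mul]
        rfl
    _ ≤ _ := (enorm_add_le _ _).trans <| add_le_add
        (enorm_integral_crossKernel_le hsm hs hf.aemeasurable (hg.aemeasurable.sub_const _))
        (enorm_integral_crossKernel_le hsm hs hg.aemeasurable (hf.aemeasurable.sub_const _))

/-- Theorem 4.3 (second part), stated with the abstract properties of a rearrangement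
invariant norm used in its proof: if `N` (with associate functional
`N'(h) = sup {∫ |g h| dμ : N(g) ≤ 1}`) satisfies the Hardy–Littlewood and Hölder
inequalities via decreasing rearrangements, then for bounded measurable real `f, g`
on a probability space,
`‖fg - (fg)_Ω‖₁ ≤ N(f) N'(g - g_Ω) + N'(g) N(f - f_Ω)`. -/
theorem leibniz_rule_associate_space
    {Ω : Type*} [MeasurableSpace Ω] (μ : Measure Ω) [IsProbabilityMeasure μ]
    (N N' : (Ω → ℝ) → ℝ≥0∞)
    (hN' : ∀ h : Ω → ℝ,
      N' h = ⨆ (g : Ω → ℝ) (_ : N g ≤ 1), ∫⁻ x, ENNReal.ofReal |g x * h x| ∂μ)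
    (hHL : ∀ u v : Ω → ℝ, Measurable u → Measurable v →
      (∫⁻ x, ENNReal.ofReal |u x * v x| ∂μ) ≤
          (∫⁻ t in Set.Ioi (0 : ℝ), decRearr μ u t * decRearr μ v t) ∧
      (∫⁻ t in Set.Ioi (0 : ℝ), decRearr μ u t * decRearr μ v t) ≤ N u * N' v)
    (f g : Ω → ℝ) (hf : Measurable f) (hg : Measurable g)
    (hfb : ∃ C : ℝ, ∀ x, |f x| ≤ C) (hgb : ∃ C : ℝ, ∀ x, |g x| ≤ C) :
    eLpNorm (fun x => f x * g x - ∫ y, f y * g y ∂μ) 1 μ ≤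
      N f * N' (fun x => g x - ∫ y, g y ∂μ) +
      N' g * N (fun x => f x - ∫ y, f y ∂μ) := by
  obtain ⟨C, hC⟩ := hfb
  obtain ⟨D, hD⟩ := hgb
  have hfi : Integrable f μ := .of_bound hf.aestronglyMeasurable C (.of_forall hC)
  have hgi : Integrable g μ := .of_bound hg.aestronglyMeasurable D (.of_forall hD)
  have hfgi : Integrable (fun x => f x * g x) μ :=
    hgi.bdd_mul hf.aestronglyMeasurable (.of_forall hC)
  exact (leibniz_rule_associate_space_general hfi hgi hfgi).trans <| add_le_add
    (hHL _ _ hf (hg.sub_const _)).2 ((hHL _ _ (hf.sub_const _) hg).2.trans_eq (mul_comm _ _))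
end
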